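/- Let p be a prime, n ≥ 2 an integer, q a power of p, and F a finite field with q^n elements. For a divisor d of n, the elements of F satisfying x^{q^d} = x form the subfield of F with q^d elements. Then the maximum of the orders |H| over all subgroups H of the multiplicative group F^× such that, for every divisor d of n with d < n, H intersects {x ∈ F^× : x^{q^d} = x} only in {1}, equals Φ*_n(q); moreover this maximum is attained by a unique subgroup. -/

import Mathlib

/-- `Phi n q` is the `n`-th cyclotomic polynomial evaluated at `q`. -/
noncomputable def Phi (n q : ℕ) : ℕ :=
  ((Polynomial.cyclotomic n ℤ).eval (q : ℤ)).toNat

/-- `PhiStar n q` is the largest divisor of `Phi n q` that is coprime to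
`∏_{k=1}^{n-1} (q^k - 1)` (an empty product is `1`). -/
noncomputable def PhiStar (n q : ℕ) : ℕ :=
  sSup {m : ℕ | m ∣ Phi n q ∧ Nat.Coprime m (∏ k ∈ Finset.Ico 1 n, (q ^ k - 1))}

lemma Phi_pos (n q : ℕ) (hq : 2 ≤ q) : 0 < Phi n q := by
  have : 0 < (Polynomial.cyclotomic n ℤ).eval (q : ℤ) :=
    Polynomial.cyclotomic_pos' n (by exact_mod_cast hq)
  unfold Phi
  omega

lemma Phi_cast (n q : ℕ) (hq : 2 ≤ q) :
    (Phi n q : ℤ) = (Polynomial.cyclotomic n ℤ).eval (q : ℤ) := by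
  have : 0 < (Polynomial.cyclotomic n ℤ).eval (q : ℤ) :=
    Polynomial.cyclotomic_pos' n (by exact_mod_cast hq)
  unfold Phi
  omega

lemma prod_Phi (n q : ℕ) (hn : 0 < n) (hq : 2 ≤ q) :
    ∏ d ∈ n.divisors, Phi d q = q ^ n - 1 := by
  have h := congrArg (Polynomial.eval (q : ℤ)) (Polynomial.prod_cyclotomic_eq_X_pow_sub_one hn ℤ)
  rw [Polynomial.eval_prod] at h
  simp only [Polynomial.eval_sub, Polynomial.eval_pow, Polynomial.eval_X, Polynomial.eval_one] at h
  have h1 : 1 ≤ q ^ n := Nat.one_le_pow _ _ (by omega)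
  zify [h1]
  rw [← h]
  exact Finset.prod_congr rfl fun d _ => Phi_cast d q hq

lemma Phi_dvd (n q : ℕ) (hn : 0 < n) (hq : 2 ≤ q) : Phi n q ∣ q ^ n - 1 := by
  rw [← prod_Phi n q hn hq]
  exact Finset.dvd_prod_of_mem _ (by simp; omega)

lemma cond_iff (q n : ℕ) (hq : 2 ≤ q) (hn : 2 ≤ n)
    (F : Type*) [Field F] [Fintype F] (hF : Fintype.card F = q ^ n) (H : Subgroup Fˣ) :
    (∀ d : ℕ, d ∣ n → d < n → ∀ x ∈ H, ((x : F) ^ q ^ d = (x : F)) → x = 1) ↔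
    (Nat.card H ∣ Phi n q ∧ Nat.Coprime (Nat.card H) (∏ k ∈ Finset.Ico 1 n, (q ^ k - 1))) := by
  have hcard : Nat.card Fˣ = q ^ n - 1 := by
    rw [Nat.card_units, Nat.card_eq_fintype_card, hF]
  have key : ∀ (d : ℕ) (x : Fˣ), (x : F) ^ q ^ d = (x : F) ↔ x ^ (q ^ d - 1) = 1 := by
    intro d x
    have h1 : 1 ≤ q ^ d := Nat.one_le_pow _ _ (by omega)
    rw [← Units.val_pow_eq_pow_val, Units.val_inj]
    conv_lhs => rw [← Nat.sub_add_cancel h1, pow_succ]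
    simp
  have hdvd : Nat.card H ∣ q ^ n - 1 := hcard ▸ H.card_subgroup_dvd_card
  constructor
  · intro h
    have hco : ∀ k ∈ Finset.Ico 1 n, Nat.Coprime (Nat.card H) (q ^ k - 1) := by
      intro k hk
      rw [Finset.mem_Ico] at hk
      refine Nat.coprime_of_dvd fun r hr hr1 hr2 => ?_
      have : Fact r.Prime := ⟨hr⟩
      obtain ⟨x, hx⟩ := exists_prime_orderOf_dvd_card' (G := H) r hr1
      have hg : r ∣ q ^ (Nat.gcd k n) - 1 := by
        rw [← Nat.pow_sub_one_gcd_pow_sub_one]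
        exact Nat.dvd_gcd hr2 (hr1.trans hdvd)
      have hlt : Nat.gcd k n < n := lt_of_le_of_lt (Nat.gcd_le_left _ (by omega)) hk.2
      have hx1 := h _ (Nat.gcd_dvd_right k n) hlt x x.2 (by
        rw [key]
        have : x ^ (q ^ (Nat.gcd k n) - 1) = 1 := orderOf_dvd_iff_pow_eq_one.1 (hx ▸ hg)
        exact_mod_cast congrArg (Subtype.val) this)
      have : x = 1 := Subtype.ext hx1
      rw [this, orderOf_one] at hx
      exact hr.one_lt.ne hx
    refine ⟨?_, Nat.Coprime.prod_right hco⟩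
    have hp := prod_Phi n q (by omega) hq
    rw [← Nat.cons_self_properDivisors (by omega), Finset.prod_cons] at hp
    rw [← hp] at hdvd
    refine Nat.Coprime.dvd_of_dvd_mul_right (Nat.Coprime.prod_right fun d hd => ?_) hdvd
    rw [Nat.mem_properDivisors] at hd
    have hd0 : 0 < d := Nat.pos_of_dvd_of_pos hd.1 (by omega)
    exact Nat.Coprime.coprime_dvd_right (Phi_dvd d q hd0 hq)
      (hco d (Finset.mem_Ico.2 ⟨hd0, hd.2⟩))
  · rintro ⟨-, h⟩ d hd hdn x hx hxd
    rw [key] at hxd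
    have hd0 : 0 < d := Nat.pos_of_dvd_of_pos hd (by omega)
    have h1 : orderOf x ∣ ∏ k ∈ Finset.Ico 1 n, (q ^ k - 1) :=
      (orderOf_dvd_of_pow_eq_one hxd).trans
        (Finset.dvd_prod_of_mem (fun k => q ^ k - 1) (Finset.mem_Ico.2 ⟨hd0, hdn⟩))
    have h2 : orderOf x ∣ Nat.card H := H.orderOf_dvd_natCard hx
    exact orderOf_eq_one_iff.1 (Nat.eq_one_of_dvd_coprimes h h2 h1)

lemma subgroup_unique (F : Type*) [Field F] [Fintype F] (H K : Subgroup Fˣ)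
    (h : Nat.card H = Nat.card K) : H = K := by
  have key : ∀ L : Subgroup Fˣ, L = rootsOfUnity (Nat.card L) F := by
    intro L
    have : NeZero (Nat.card L) := ⟨Nat.card_pos.ne'⟩
    refine Subgroup.eq_of_le_of_card_ge ?_ ?_
    · intro x hx
      rw [mem_rootsOfUnity]
      exact orderOf_dvd_iff_pow_eq_one.1 (L.orderOf_dvd_natCard hx)
    · exact card_rootsOfUnity F _
  rw [key H, key K, h]


/-- Remark 6: for a prime power `q` and finite field `F` with `q^n` elements,
`Φ*_n(q)` is the maximal order of a subgroup of `F^×` meeting each proper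
subfield's multiplicative group `{x : x^{q^d} = x}` (for `d ∣ n`, `d < n`)
trivially, and a unique subgroup attains this maximum. -/
theorem phiStar_eq_max_subgroup_card (p q n : ℕ) (hp : p.Prime)
    (hq : ∃ e : ℕ, 0 < e ∧ q = p ^ e) (hn : 2 ≤ n)
    (F : Type*) [Field F] [Fintype F] (hF : Fintype.card F = q ^ n) :
    IsGreatest {m : ℕ | ∃ H : Subgroup Fˣ, Nat.card H = m ∧
        ∀ d : ℕ, d ∣ n → d < n → ∀ x ∈ H, ((x : F) ^ q ^ d = (x : F)) → x = 1}
      (PhiStar n q) ∧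
    ∃! H : Subgroup Fˣ,
      (∀ d : ℕ, d ∣ n → d < n → ∀ x ∈ H, ((x : F) ^ q ^ d = (x : F)) → x = 1) ∧
      Nat.card H = PhiStar n q := by
  obtain ⟨e, he, hqe⟩ := hq
  have hq2 : 2 ≤ q := by
    rw [hqe]
    exact hp.two_le.trans (Nat.le_self_pow he.ne' p)
  have hmem : PhiStar n q ∈
      {m : ℕ | m ∣ Phi n q ∧ Nat.Coprime m (∏ k ∈ Finset.Ico 1 n, (q ^ k - 1))} :=
    Nat.sSup_mem ⟨1, by simp⟩ ⟨Phi n q, fun m hm => Nat.le_of_dvd (Phi_pos n q hq2) hm.1⟩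
  have hcard : Nat.card Fˣ = q ^ n - 1 := by
    rw [Nat.card_units, Nat.card_eq_fintype_card, hF]
  obtain ⟨g, hg⟩ := IsCyclic.exists_ofOrder_eq_natCard (α := Fˣ)
  have hex : ∃ H : Subgroup Fˣ, Nat.card H = PhiStar n q := by
    have hd : PhiStar n q ∣ Nat.card Fˣ := by
      rw [hcard]
      exact hmem.1.trans (Phi_dvd n q (by omega) hq2)
    obtain ⟨c, hc⟩ := hd
    have hpos : 0 < Nat.card Fˣ := Nat.card_pos
    have hc0 : c ≠ 0 := by
      rintro rfl
      omega
    refine ⟨Subgroup.zpowers (g ^ c), ?_⟩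
    rw [Nat.card_zpowers, orderOf_pow_of_dvd hc0 (by rw [hg, hc]; exact dvd_mul_left _ _), hg, hc]
    exact Nat.mul_div_cancel _ (Nat.pos_of_ne_zero hc0)
  obtain ⟨H, hH⟩ := hex
  have hHc := (cond_iff q n hq2 hn F hF H).2 (by rw [hH]; exact hmem)
  refine ⟨⟨⟨H, hH, hHc⟩, ?_⟩, H, ⟨hHc, hH⟩, ?_⟩
  · rintro m ⟨K, rfl, hK⟩
    exact le_csSup ⟨Phi n q, fun m hm => Nat.le_of_dvd (Phi_pos n q hq2) hm.1⟩
      ((cond_iff q n hq2 hn F hF K).1 hK)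
  · rintro K ⟨-, hK⟩
    exact subgroup_unique F K H (hK.trans hH.symm)
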